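/- arXiv:2111.08754 — 3 statements merged into one kernel-verified Lean document; each statement's English description precedes it below -/
import Mathlib

section
/- For every m with 1 ≤ m ≤ n, define for nonnegative integers r, s with r+s = m the polynomial C^{(rs)} = −(k−r+1)(n−k+r−1)·p_{r−1}·q_s + (k+s−1)(n−k−s+1)·p_r·q_{s−1} + 2(r+s−1)·Σ_{d=0}^{r−1} p_d·q_{r+s−d−1}. Then Σ_{r+s=m, r,s≥0} C^{(rs)} lies in the ideal I. -/
open MvPolynomial Finset

/-- The polynomial ring `P = ℂ[p_1,…,p_k,q_1,…,q_{n-k}]`: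
the variable `Sum.inl j` is `p_{j+1}` and `Sum.inr l` is `q_{l+1}`. -/
abbrev PR (n k : ℕ) := MvPolynomial (Fin k ⊕ Fin (n - k)) ℂ

/-- `pZ n k a` is the Chern class generator `p_a`, with the conventions `p_0 = 1`
and `p_a = 0` for `a < 0` or `a > k`. -/
noncomputable def pZ (n k : ℕ) (a : ℤ) : PR n k :=
  if a = 0 then 1
  else if h : 1 ≤ a ∧ a ≤ (k : ℤ) then
    MvPolynomial.X (Sum.inl ⟨(a - 1).toNat, by omega⟩)
  else 0

/-- `qZ n k a` is the Chern class generator `q_a`, with the conventions `q_0 = 1`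
and `q_a = 0` for `a < 0` or `a > n-k`. -/
noncomputable def qZ (n k : ℕ) (a : ℤ) : PR n k :=
  if a = 0 then 1
  else if h : 1 ≤ a ∧ a ≤ ((n - k : ℕ) : ℤ) then
    MvPolynomial.X (Sum.inr ⟨(a - 1).toNat, by omega⟩)
  else 0

/-- `R_m = Σ_{r+s=m, r,s ≥ 0} p_r q_s`. -/
noncomputable def Rm (n k : ℕ) (m : ℕ) : PR n k :=
  ∑ x ∈ Finset.HasAntidiagonal.antidiagonal m, pZ n k x.1 * qZ n k x.2

/-- The ideal `I ⊆ P` generated by `R_1, …, R_n`. -/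
noncomputable def Igr (n k : ℕ) : Ideal (PR n k) :=
  Ideal.span ((fun m => Rm n k m) '' (Finset.Icc 1 n : Finset ℕ))

/-- Multiplication by `g` as a linear endomorphism of `P`. -/
noncomputable def Mop (n k : ℕ) (g : PR n k) : Module.End ℂ (PR n k) :=
  LinearMap.mulLeft ℂ g

/-- The partial derivative with respect to the variable `i`, as a linear endomorphism. -/
noncomputable def Pd (n k : ℕ) (i : Fin k ⊕ Fin (n - k)) : Module.End ℂ (PR n k) :=
  (MvPolynomial.pderiv i).toLinearMap

/-- `C^{(rs)} = -(k-r+1)(n-k+r-1)·p_{r-1}·q_s + (k+s-1)(n-k-s+1)·p_r·q_{s-1}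
              + 2(r+s-1)·Σ_{d=0}^{r-1} p_d·q_{r+s-d-1}`. -/
noncomputable def Cpoly (n k : ℕ) (r s : ℕ) : PR n k :=
  (-(((k : ℂ) - (r : ℕ) + 1) * ((n : ℂ) - (k : ℕ) + (r : ℕ) - 1))) •
      (pZ n k ((r : ℤ) - 1) * qZ n k (s : ℕ))
  + (((k : ℂ) + (s : ℕ) - 1) * ((n : ℂ) - (k : ℕ) - (s : ℕ) + 1)) •
      (pZ n k (r : ℕ) * qZ n k ((s : ℤ) - 1))
  + (2 * ((r : ℂ) + (s : ℕ) - 1)) •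
      ∑ d ∈ Finset.range r, pZ n k (d : ℕ) * qZ n k ((r : ℤ) + (s : ℕ) - (d : ℕ) - 1)

/-!
For `r + s = m + 1`, shift `r` in the first term of `C^{(rs)}` and `s` in the second.
In the inner sums of the third term, a product `p_r q_s` with `r + s = m` occurs `s + 1` times.
Altogether it receives the coefficient
`-(k - r)(n - k + r) + (k + s)(n - k - s) + 2m(s + 1) = m(n - 2k + m + 2)`,
which depends on `m` only, so the `C^{(rs)}` add up to `m(n - 2k + m + 2) R_m`. If `1 ≤ m ≤ n`, this
is a multiple of a generator of `I`; otherwise `m = 0` or `R_m = 0`.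
-/

theorem sum_antidiagonal_succ_sum_range {M : Type*} [AddCommMonoid M] (m : ℕ) (f : ℕ → M) :
    ∑ x ∈ antidiagonal (m + 1), ∑ d ∈ range x.1, f d =
      ∑ x ∈ antidiagonal m, (x.2 + 1) • f x.1 := by
  induction m with
  | zero => simp [Nat.sum_antidiagonal_succ]
  | succ m ih =>
    have range_eq : ∑ d ∈ range (m + 1), f d = ∑ x ∈ antidiagonal m, f x.1 :=
      (Nat.sum_antidiagonal_eq_sum_range_succ_mk (fun x ↦ f x.1) m).symm
    rw [Nat.sum_antidiagonal_succ', ih, Nat.sum_antidiagonal_succ', sum_range_succ, range_eq]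
    simp only [succ_nsmul _ (_ + 1), sum_add_distrib, zero_add, one_smul]
    abel

section DoublyIndexedFamily

variable {R M : Type*} [CommRing R] [AddCommGroup M] [Module R M]

theorem sum_antidiagonal_succ_smul_sum_range (f : ℤ → ℤ → M) (m : ℕ) :
    ∑ x ∈ antidiagonal (m + 1), ((x.1 : R) + x.2 - 1) •
        ∑ d ∈ range x.1, f d ((x.1 : ℤ) + x.2 - d - 1) =
      ∑ x ∈ antidiagonal m, ((m : R) * (x.2 + 1)) • f x.1 x.2 := by
  calc
    _ = ∑ x ∈ antidiagonal (m + 1), (m : R) • ∑ d ∈ range x.1, f d (m - d) := by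
      refine sum_congr rfl fun x hx ↦ ?_
      have hx : x.1 + x.2 = m + 1 := mem_antidiagonal.mp hx
      have hcoeff : (x.1 : R) + x.2 - 1 = m := by
        rw [← Nat.cast_add, hx, Nat.cast_succ, add_sub_cancel_right]
      have hindex (d : ℕ) : (x.1 : ℤ) + x.2 - d - 1 = m - d := by lia
      simp only [hcoeff, hindex]
    _ = ∑ x ∈ antidiagonal m, (m : R) • (x.2 + 1) • f x.1 (m - x.1) := by
      rw [← smul_sum, sum_antidiagonal_succ_sum_range m fun d ↦ f d (m - d), smul_sum]
    _ = _ := by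
      refine sum_congr rfl fun x hx ↦ ?_
      have hx : x.1 + x.2 = m := mem_antidiagonal.mp hx
      have hindex : (m : ℤ) - x.1 = x.2 := by lia
      rw [hindex, ← Nat.cast_smul_eq_nsmul R, smul_smul, Nat.cast_succ]

theorem sum_antidiagonal_succ_quadratic_smul (κ ν : R) {f : ℤ → ℤ → M} (m : ℕ)
    (hfst : f (-1) (m + 1) = 0) (hsnd : f (m + 1) (-1) = 0) :
    ∑ x ∈ antidiagonal (m + 1),
        ((-((κ - x.1 + 1) * (ν - κ + x.1 - 1))) • f (x.1 - 1) x.2 +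
          ((κ + x.2 - 1) * (ν - κ - x.2 + 1)) • f x.1 (x.2 - 1) +
          (2 * ((x.1 : R) + x.2 - 1)) • ∑ d ∈ range x.1, f d ((x.1 : ℤ) + x.2 - d - 1)) =
      ((m : R) * (ν - 2 * κ + m + 2)) • ∑ x ∈ antidiagonal m, f x.1 x.2 := by
  have shift_fst : ∑ x ∈ antidiagonal (m + 1),
        (-((κ - x.1 + 1) * (ν - κ + x.1 - 1))) • f (x.1 - 1) x.2 =
      ∑ x ∈ antidiagonal m, (-((κ - x.1) * (ν - κ + x.1))) • f x.1 x.2 := by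
    simp [Nat.sum_antidiagonal_succ, hfst, ← sub_sub, ← add_assoc]
  have shift_snd : ∑ x ∈ antidiagonal (m + 1),
        ((κ + x.2 - 1) * (ν - κ - x.2 + 1)) • f x.1 (x.2 - 1) =
      ∑ x ∈ antidiagonal m, ((κ + x.2) * (ν - κ - x.2)) • f x.1 x.2 := by
    simp [Nat.sum_antidiagonal_succ', hsnd, ← sub_sub, ← add_assoc]
  simp only [sum_add_distrib, mul_smul (2 : R), ← smul_sum]
  rw [shift_fst, shift_snd, sum_antidiagonal_succ_smul_sum_range]
  simp only [smul_sum, ← sum_add_distrib, smul_smul, ← add_smul]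
  refine sum_congr rfl fun x hx ↦ ?_
  have hm : (m : R) = x.1 + x.2 := by rw [← mem_antidiagonal.mp hx, Nat.cast_add]
  rw [hm]
  congr 1
  ring

end DoublyIndexedFamily

section ChernClasses

variable {n k : ℕ}

theorem pZ_of_neg {a : ℤ} (ha : a < 0) : pZ n k a = 0 := by
  rw [pZ, if_neg (by lia), dif_neg (by lia)]

theorem pZ_of_gt {a : ℤ} (ha : (k : ℤ) < a) : pZ n k a = 0 := by
  rw [pZ, if_neg (by lia), dif_neg (by lia)]

theorem qZ_of_neg {a : ℤ} (ha : a < 0) : qZ n k a = 0 := by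
  rw [qZ, if_neg (by lia), dif_neg (by lia)]

theorem qZ_of_gt {a : ℤ} (ha : ((n - k : ℕ) : ℤ) < a) : qZ n k a = 0 := by
  rw [qZ, if_neg (by lia), dif_neg (by lia)]

theorem sum_antidiagonal_succ_Cpoly (n k m : ℕ) :
    ∑ x ∈ antidiagonal (m + 1), Cpoly n k x.1 x.2 =
      ((m : ℂ) * (n - 2 * k + m + 2)) • Rm n k m :=
  sum_antidiagonal_succ_quadratic_smul (k : ℂ) (n : ℂ) (f := fun a b ↦ pZ n k a * qZ n k b) m
    (by simp [pZ_of_neg]) (by simp [qZ_of_neg])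

theorem Rm_eq_zero_of_lt {m : ℕ} (hk : k ≤ n) (hm : n < m) : Rm n k m = 0 := by
  refine sum_eq_zero fun x hx ↦ ?_
  have hx : x.1 + x.2 = m := mem_antidiagonal.mp hx
  obtain h | h : k < x.1 ∨ n - k < x.2 := by lia
  · rw [pZ_of_gt (by exact_mod_cast h), zero_mul]
  · rw [qZ_of_gt (by exact_mod_cast h), mul_zero]

theorem Rm_mem_Igr {m : ℕ} (hk : k ≤ n) (hm : 1 ≤ m) : Rm n k m ∈ Igr n k := by
  rcases le_or_gt m n with hmn | hmn
  · exact Ideal.subset_span ⟨m, mem_coe.mpr (mem_Icc.mpr ⟨hm, hmn⟩), rfl⟩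
  · exact Rm_eq_zero_of_lt hk hmn ▸ zero_mem _

end ChernClasses

theorem sum_C_mem_ideal_general (n k m : ℕ) (hk : k ≤ n) :
    ∑ x ∈ antidiagonal m, Cpoly n k x.1 x.2 ∈ Igr n k := by
  obtain _ | _ | m := m
  · simp [Cpoly, pZ_of_neg, qZ_of_neg]
  · simp [sum_antidiagonal_succ_Cpoly]
  · rw [sum_antidiagonal_succ_Cpoly]
    exact Submodule.smul_of_tower_mem _ _ (Rm_mem_Igr hk m.succ_pos)

/-- For every `1 ≤ m ≤ n`, the sum `Σ_{r+s=m, r,s ≥ 0} C^{(rs)}` lies in the ideal `I`. -/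
theorem sum_C_mem_ideal (n k : ℕ) (hk1 : 1 ≤ k) (hk2 : k ≤ n - 1)
    (m : ℕ) (hm1 : 1 ≤ m) (hm2 : m ≤ n) :
    ∑ x ∈ Finset.HasAntidiagonal.antidiagonal m, Cpoly n k x.1 x.2 ∈ Igr n k :=
  sum_C_mem_ideal_general n k m (hk2.trans n.pred_le)
end

section
/- For every m with 1 ≤ m ≤ n and every l with 1 ≤ l ≤ n−k, define for nonnegative integers r, s with r+s = m the polynomial B^{(rs)}_l = Σ_{d=0}^{l−1}(l+s−2d−1)·q_d·q_{l+s−d−1}·p_r + (r+l−1)·(Σ_{d=0}^{l−1} p_{r+l−d−1}·q_d)·q_s. Then Σ_{r+s=m, r,s≥0} B^{(rs)}_l lies in the ideal I. -/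
open MvPolynomial Finset

/-- `B^{(rs)}_l = Σ_{d=0}^{l-1}(l+s-2d-1)·q_d·q_{l+s-d-1}·p_r
               + (r+l-1)·(Σ_{d=0}^{l-1} p_{r+l-d-1}·q_d)·q_s`. -/
noncomputable def Bpoly (n k : ℕ) (l r s : ℕ) : PR n k :=
  (∑ d ∈ Finset.range l, (((l : ℂ) + (s : ℕ) - 2 * (d : ℕ) - 1)) •
      (qZ n k (d : ℕ) * qZ n k ((l : ℤ) + (s : ℕ) - (d : ℕ) - 1) * pZ n k (r : ℕ)))
  + ((r : ℂ) + (l : ℕ) - 1) •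
      ((∑ d ∈ Finset.range l, pZ n k ((r : ℤ) + (l : ℕ) - (d : ℕ) - 1) * qZ n k (d : ℕ))
        * qZ n k (s : ℕ))

/-!
Work with the monomials `q_d p_r q_t`, `d + r + t = N`, where `N = m + l - 1`. In each half of
`∑_{r+s=m} B^{(rs)}_l`, and in any partial sum of the `j q_{N-j} R_j`, the coefficient of
`q_d p_r q_t` is a linear form in `d, r, t` restricted to a region cut out by inequalities. Since
`q_d p_r q_t` is symmetric in `d` and `t`, such sums may be compared up to exchanging `d` and `t`,
and this gives, with no relation imposed on the `p_a` and `q_a`,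
`∑_{r+s=m} B^{(rs)}_l = ∑_{j=m}^{N} j q_{N-j} R_j - ∑_{j=0}^{l-2} j q_{N-j} R_j`.
Every `j R_j` lies in the ideal: the factor `j` removes `R_0 = 1`, and `R_j = 0` for `j > n`.
-/

section TripleSums

variable {M : Type*}

lemma mem_antidiagonalTuple_three {N : ℕ} {z : Fin 3 → ℕ} :
    z ∈ Nat.antidiagonalTuple 3 N ↔ z 0 + z 1 + z 2 = N := by
  rw [Nat.mem_antidiagonalTuple, Fin.sum_univ_three]

lemma sum_antidiagonalTuple_three_swap [AddCommMonoid M] (N : ℕ) (f : ℕ → ℕ → ℕ → M) :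
    ∑ z ∈ Nat.antidiagonalTuple 3 N, f (z 2) (z 1) (z 0) =
      ∑ z ∈ Nat.antidiagonalTuple 3 N, f (z 0) (z 1) (z 2) := by
  refine sum_nbij' (fun z ↦ ![z 2, z 1, z 0]) (fun z ↦ ![z 2, z 1, z 0])
    ?_ ?_ ?_ ?_ fun _ _ ↦ rfl
  iterate 2
    intro z hz
    simp only [mem_antidiagonalTuple_three, Matrix.cons_val] at hz ⊢
    omega
  all_goals
    intro z _
    ext i
    fin_cases i <;> rfl

lemma sum_antidiagonalTuple_three_sub_swap_eq_zero [AddCommGroup M] (N : ℕ) (P : ℕ → Prop)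
    [DecidablePred P] (f : ℕ → ℕ → ℕ → M) :
    ∑ z ∈ Nat.antidiagonalTuple 3 N with P (z 1),
      (f (z 0) (z 1) (z 2) - f (z 2) (z 1) (z 0)) = 0 := by
  rw [sum_sub_distrib, sum_filter, sum_filter, sub_eq_zero]
  exact (sum_antidiagonalTuple_three_swap N fun d r t ↦ if P r then f d r t else 0).symm

variable [AddCommMonoid M]

lemma sum_antidiagonal_filter_sum_antidiagonal (N : ℕ) (P : ℕ → Prop) [DecidablePred P]
    (f : ℕ → ℕ → ℕ → M) :
    ∑ x ∈ antidiagonal N with P x.1, ∑ y ∈ antidiagonal x.2, f x.1 y.1 y.2 =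
      ∑ z ∈ Nat.antidiagonalTuple 3 N with P (z 0), f (z 0) (z 1) (z 2) := by
  rw [sum_sigma']
  refine sum_nbij' (fun x ↦ ![x.1.1, x.2.1, x.2.2])
    (fun z ↦ ⟨(z 0, z 1 + z 2), (z 1, z 2)⟩) ?_ ?_ ?_ ?_ fun _ _ ↦ rfl
  · intro x hx
    simp only [mem_sigma, mem_filter, HasAntidiagonal.mem_antidiagonal,
      mem_antidiagonalTuple_three, Matrix.cons_val] at hx ⊢
    exact ⟨by omega, hx.1.2⟩
  · intro z hz
    simp only [mem_sigma, mem_filter, HasAntidiagonal.mem_antidiagonal,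
      mem_antidiagonalTuple_three] at hz ⊢
    exact ⟨⟨by omega, hz.2⟩, trivial⟩
  · rintro ⟨⟨d, e⟩, r, t⟩ hx
    obtain rfl : r + t = e := HasAntidiagonal.mem_antidiagonal.mp (mem_sigma.mp hx).2
    rfl
  · intro z _
    ext i
    fin_cases i <;> rfl

lemma sum_antidiagonal_sum_antidiagonal_add_right (m L : ℕ) (f : ℕ → ℕ → ℕ → M) :
    ∑ y ∈ antidiagonal m, ∑ x ∈ antidiagonal L, f x.1 y.1 (y.2 + x.2) =
      ∑ z ∈ Nat.antidiagonalTuple 3 (m + L) with z 0 ≤ L ∧ z 1 ≤ m, f (z 0) (z 1) (z 2) := by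
  rw [← sum_product']
  refine sum_nbij' (fun w ↦ ![w.2.1, w.1.1, w.1.2 + w.2.2])
    (fun z ↦ ((z 1, m - z 1), (z 0, L - z 0))) ?_ ?_ ?_ ?_ fun _ _ ↦ rfl
  · intro w hw
    simp only [mem_product, HasAntidiagonal.mem_antidiagonal, mem_filter,
      mem_antidiagonalTuple_three, Matrix.cons_val] at hw ⊢
    omega
  · intro z hz
    simp only [mem_product, HasAntidiagonal.mem_antidiagonal, mem_filter,
      mem_antidiagonalTuple_three] at hz ⊢
    omega
  · intro w hw
    simp only [mem_product, HasAntidiagonal.mem_antidiagonal] at hw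
    ext <;> simp only [Matrix.cons_val] <;> omega
  · intro z hz
    simp only [mem_filter, mem_antidiagonalTuple_three] at hz
    ext i
    fin_cases i <;> simp only [Fin.reduceFinMk, Matrix.cons_val]
    omega

lemma sum_antidiagonal_sum_antidiagonal_add_left (m L : ℕ) (f : ℕ → ℕ → ℕ → M) :
    ∑ y ∈ antidiagonal m, ∑ x ∈ antidiagonal L, f x.1 (y.1 + x.2) y.2 =
      ∑ z ∈ Nat.antidiagonalTuple 3 (m + L) with z 0 ≤ L ∧ z 2 ≤ m, f (z 0) (z 1) (z 2) := by
  rw [← sum_product']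
  refine sum_nbij' (fun w ↦ ![w.2.1, w.1.1 + w.2.2, w.1.2])
    (fun z ↦ ((m - z 2, z 2), (z 0, L - z 0))) ?_ ?_ ?_ ?_ fun _ _ ↦ rfl
  · intro w hw
    simp only [mem_product, HasAntidiagonal.mem_antidiagonal, mem_filter,
      mem_antidiagonalTuple_three, Matrix.cons_val] at hw ⊢
    omega
  · intro z hz
    simp only [mem_product, HasAntidiagonal.mem_antidiagonal, mem_filter,
      mem_antidiagonalTuple_three] at hz ⊢
    omega
  · intro w hw
    simp only [mem_product, HasAntidiagonal.mem_antidiagonal] at hw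
    ext <;> simp only [Matrix.cons_val] <;> omega
  · intro z hz
    simp only [mem_filter, mem_antidiagonalTuple_three] at hz
    ext i
    fin_cases i <;> simp only [Fin.reduceFinMk, Matrix.cons_val]
    omega

end TripleSums

section Sequences

variable {A : Type*} [CommRing A] (p q : ℕ → A)

lemma sum_filter_mul_natCast_mul_sum_antidiagonal (N : ℕ) (P : ℕ → Prop) [DecidablePred P] :
    ∑ x ∈ antidiagonal N with P x.1,
        q x.1 * ((x.2 : A) * ∑ y ∈ antidiagonal x.2, p y.1 * q y.2) =
      ∑ z ∈ Nat.antidiagonalTuple 3 N with P (z 0),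
        ((z 1 : A) + z 2) * (q (z 0) * p (z 1) * q (z 2)) := by
  rw [← sum_antidiagonal_filter_sum_antidiagonal N P fun d r t ↦
    ((r : A) + t) * (q d * p r * q t)]
  refine sum_congr rfl fun x _ ↦ ?_
  simp only [mul_sum]
  refine sum_congr rfl fun y hy ↦ ?_
  rw [← mem_antidiagonal.mp hy]
  push_cast
  ring

lemma sum_filter_le_mul_add_sum_filter_le_mul_eq_sub (m L : ℕ) :
    ∑ z ∈ Nat.antidiagonalTuple 3 (m + L) with z 0 ≤ L ∧ z 1 ≤ m,
        ((z 2 : A) - z 0) * (q (z 0) * p (z 1) * q (z 2)) +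
      ∑ z ∈ Nat.antidiagonalTuple 3 (m + L) with z 0 ≤ L ∧ z 2 ≤ m,
        ((z 0 : A) + z 1) * (q (z 0) * p (z 1) * q (z 2)) =
      ∑ z ∈ Nat.antidiagonalTuple 3 (m + L) with z 0 ≤ L,
        ((z 1 : A) + z 2) * (q (z 0) * p (z 1) * q (z 2)) -
      ∑ z ∈ Nat.antidiagonalTuple 3 (m + L) with m < z 0,
        ((z 1 : A) + z 2) * (q (z 0) * p (z 1) * q (z 2)) := by
  have antisymm : ∑ z ∈ Nat.antidiagonalTuple 3 (m + L) with m < z 1,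
      ((z 0 : A) - z 2) * (q (z 0) * p (z 1) * q (z 2)) = 0 := by
    rw [← sum_antidiagonalTuple_three_sub_swap_eq_zero (m + L) (m < ·) fun d r t ↦
      (d : A) * (q d * p r * q t)]
    exact sum_congr rfl fun z _ ↦ by ring
  have swap : ∑ z ∈ Nat.antidiagonalTuple 3 (m + L) with m < z 0,
        ((z 1 : A) + z 2) * (q (z 0) * p (z 1) * q (z 2)) =
      ∑ z ∈ Nat.antidiagonalTuple 3 (m + L) with m < z 2,
        ((z 0 : A) + z 1) * (q (z 0) * p (z 1) * q (z 2)) := by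
    rw [sum_filter, sum_filter, ← sum_antidiagonalTuple_three_swap (m + L) fun d r t ↦
      if m < d then ((r : A) + t) * (q d * p r * q t) else 0]
    refine sum_congr rfl fun z _ ↦ if_congr Iff.rfl ?_ rfl
    ring
  rw [swap, eq_sub_iff_add_eq, ← add_zero (∑ z ∈ _ with _ ≤ _, _), ← antisymm]
  simp only [sum_filter, ← sum_add_distrib]
  refine sum_congr rfl fun z hz ↦ ?_
  rw [mem_antidiagonalTuple_three] at hz
  -- The terms now match one by one: since `d + r + t = m + L`, `m < r` or `m < t` forces `d < L`.
  split_ifs <;> first | omega | ring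

lemma sum_antidiagonal_mul_add_mul_eq_sub (m L : ℕ) :
    ∑ y ∈ antidiagonal m, ∑ x ∈ antidiagonal L,
        (((x.2 : A) + y.2 - x.1) * (q x.1 * p y.1 * q (y.2 + x.2)) +
          ((y.1 : A) + x.1 + x.2) * (q x.1 * p (y.1 + x.2) * q y.2)) =
      ∑ x ∈ antidiagonal (m + L) with x.1 ≤ L,
        q x.1 * ((x.2 : A) * ∑ y ∈ antidiagonal x.2, p y.1 * q y.2) -
      ∑ x ∈ antidiagonal (m + L) with m < x.1,
        q x.1 * ((x.2 : A) * ∑ y ∈ antidiagonal x.2, p y.1 * q y.2) := by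
  rw [sum_filter_mul_natCast_mul_sum_antidiagonal p q (m + L) (· ≤ L),
    sum_filter_mul_natCast_mul_sum_antidiagonal p q (m + L) (m < ·),
    ← sum_filter_le_mul_add_sum_filter_le_mul_eq_sub,
    ← sum_antidiagonal_sum_antidiagonal_add_right m L fun d r t ↦ ((t : A) - d) * (q d * p r * q t),
    ← sum_antidiagonal_sum_antidiagonal_add_left m L fun d r t ↦ ((d : A) + r) * (q d * p r * q t)]
  simp only [← sum_add_distrib]
  refine sum_congr rfl fun y _ ↦ sum_congr rfl fun x _ ↦ ?_
  push_cast
  ring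

end Sequences

section Grassmannian

variable {n k : ℕ}

lemma pZ_eq_zero {a : ℕ} (h : k < a) : pZ n k a = 0 := by
  rw [pZ, if_neg (by omega), dif_neg (by omega)]

lemma qZ_eq_zero {a : ℕ} (h : n - k < a) : qZ n k a = 0 := by
  rw [qZ, if_neg (by omega), dif_neg (by omega)]

lemma Rm_eq_zero (hk : k ≤ n) {j : ℕ} (hj : n < j) : Rm n k j = 0 := by
  refine sum_eq_zero fun x hx ↦ ?_
  rw [HasAntidiagonal.mem_antidiagonal] at hx
  obtain hp | hq : k < x.1 ∨ n - k < x.2 := by omega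
  · rw [pZ_eq_zero hp, zero_mul]
  · rw [qZ_eq_zero hq, mul_zero]

lemma natCast_mul_Rm_mem_Igr (hk : k ≤ n) (j : ℕ) : (j : PR n k) * Rm n k j ∈ Igr n k := by
  obtain rfl | hj0 := j.eq_zero_or_pos
  · simp
  obtain hj | hj := le_or_gt j n
  · exact Ideal.mul_mem_left _ _ (Ideal.subset_span ⟨j, mem_coe.mpr (mem_Icc.mpr ⟨hj0, hj⟩), rfl⟩)
  · simp [Rm_eq_zero hk hj]

lemma Bpoly_zero (r s : ℕ) : Bpoly n k 0 r s = 0 := by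
  simp [Bpoly]

lemma Bpoly_succ (L r s : ℕ) :
    Bpoly n k (L + 1) r s = ∑ x ∈ antidiagonal L,
      (((x.2 : PR n k) + s - x.1) * (qZ n k x.1 * pZ n k r * qZ n k (s + x.2 : ℕ)) +
        ((r : PR n k) + x.1 + x.2) * (qZ n k x.1 * pZ n k (r + x.2 : ℕ) * qZ n k s)) := by
  rw [Bpoly, sum_mul, smul_sum, ← sum_add_distrib, Nat.sum_antidiagonal_eq_sum_range_succ_mk]
  refine sum_congr rfl fun d hd ↦ ?_
  obtain ⟨e, rfl⟩ := Nat.exists_eq_add_of_le (mem_range_succ_iff.mp hd)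
  rw [show ((d + e + 1 : ℕ) : ℤ) + s - d - 1 = (s + e : ℕ) by omega,
    show (r : ℤ) + (d + e + 1 : ℕ) - d - 1 = (r + e : ℕ) by omega, Nat.add_sub_cancel_left]
  simp only [smul_eq_C_mul, map_add, map_mul, map_sub, Nat.cast_add, Nat.cast_one, map_natCast,
    map_one, map_ofNat]
  ring

lemma sum_Bpoly_succ (m L : ℕ) :
    ∑ y ∈ antidiagonal m, Bpoly n k (L + 1) y.1 y.2 =
      ∑ x ∈ antidiagonal (m + L) with x.1 ≤ L, qZ n k x.1 * ((x.2 : PR n k) * Rm n k x.2) -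
      ∑ x ∈ antidiagonal (m + L) with m < x.1, qZ n k x.1 * ((x.2 : PR n k) * Rm n k x.2) := by
  simp only [Bpoly_succ]
  exact sum_antidiagonal_mul_add_mul_eq_sub (fun a ↦ pZ n k a) (fun a ↦ qZ n k a) m L

end Grassmannian

theorem sum_B_mem_ideal_general (n k : ℕ) (hk : k ≤ n) (m l : ℕ) :
    ∑ x ∈ antidiagonal m, Bpoly n k l x.1 x.2 ∈ Igr n k := by
  cases l with
  | zero => simp [Bpoly_zero]
  | succ L =>
    rw [sum_Bpoly_succ]
    exact sub_mem
      (sum_mem fun x _ ↦ Ideal.mul_mem_left _ _ (natCast_mul_Rm_mem_Igr hk x.2))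
      (sum_mem fun x _ ↦ Ideal.mul_mem_left _ _ (natCast_mul_Rm_mem_Igr hk x.2))

/-- For every `1 ≤ m ≤ n` and `1 ≤ l ≤ n-k`, the sum `Σ_{r+s=m, r,s ≥ 0} B^{(rs)}_l`
lies in the ideal `I`. -/
theorem sum_B_mem_ideal (n k : ℕ) (hk1 : 1 ≤ k) (hk2 : k ≤ n - 1)
    (m : ℕ) (hm1 : 1 ≤ m) (hm2 : m ≤ n) (l : ℕ) (hl1 : 1 ≤ l) (hl2 : l ≤ n - k) :
    ∑ x ∈ Finset.HasAntidiagonal.antidiagonal m, Bpoly n k l x.1 x.2 ∈ Igr n k :=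
  sum_B_mem_ideal_general n k (hk2.trans (Nat.sub_le n 1)) m l
end

section
/- As linear operators on the polynomial ring P, the commutator of D_e and D_f equals D_h: [D_e, D_f] = D_h. -/
open MvPolynomial Finset

/-- The operator `D_h = -2 Σ_{j=1}^{k} j·p_j·∂/∂p_j - 2 Σ_{j=1}^{n-k} j·q_j·∂/∂q_j + k(n-k)·id`. -/
noncomputable def Dh (n k : ℕ) : Module.End ℂ (PR n k) :=
  ∑ j : Fin k, (-2 * ((j : ℕ) + 1) : ℂ) •
      (Mop n k (MvPolynomial.X (Sum.inl j)) * Pd n k (Sum.inl j))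
  + ∑ l : Fin (n - k), (-2 * ((l : ℕ) + 1) : ℂ) •
      (Mop n k (MvPolynomial.X (Sum.inr l)) * Pd n k (Sum.inr l))
  + ((k * (n - k) : ℕ) : ℂ) • 1

/-- The second-order differential operator
`D_e = -Σ_{j=1}^{k}(k-j+1)(n-k+j-1)·p_{j-1}·∂/∂p_j
      + Σ_{j=1}^{n-k}(k+j-1)(n-k-j+1)·q_{j-1}·∂/∂q_j
      + Σ_{j,l=1}^{k}(Σ_{d=0}^{j-1}(j+l-2d-1)·p_d·p_{j+l-d-1})·∂²/(∂p_j∂p_l)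
      - Σ_{j,l=1}^{n-k}(Σ_{d=0}^{j-1}(j+l-2d-1)·q_d·q_{j+l-d-1})·∂²/(∂q_j∂q_l)
      + 2 Σ_{j=1}^{k} Σ_{l=1}^{n-k}(j+l-1)·(Σ_{d=0}^{j-1} p_d·q_{j+l-d-1})·∂²/(∂p_j∂q_l)`.
(The index `j' : Fin k` corresponds to `j = j'+1`, and similarly for the other indices.) -/
noncomputable def De (n k : ℕ) : Module.End ℂ (PR n k) :=
  ∑ j : Fin k, (-(((k : ℂ) - (j : ℕ)) * ((n : ℂ) - (k : ℕ) + (j : ℕ)))) •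
      (Mop n k (pZ n k (j : ℕ)) * Pd n k (Sum.inl j))
  + ∑ l : Fin (n - k), (((k : ℂ) + (l : ℕ)) * ((n : ℂ) - (k : ℕ) - (l : ℕ))) •
      (Mop n k (qZ n k (l : ℕ)) * Pd n k (Sum.inr l))
  + ∑ j : Fin k, ∑ l : Fin k,
      Mop n k (∑ d ∈ Finset.range ((j : ℕ) + 1),
          ((((j : ℕ) : ℂ) + (l : ℕ) + 1 - 2 * (d : ℕ))) •
            (pZ n k d * pZ n k ((j : ℕ) + (l : ℕ) + 1 - (d : ℕ) : ℤ)))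
        * (Pd n k (Sum.inl j) * Pd n k (Sum.inl l))
  - ∑ j : Fin (n - k), ∑ l : Fin (n - k),
      Mop n k (∑ d ∈ Finset.range ((j : ℕ) + 1),
          ((((j : ℕ) : ℂ) + (l : ℕ) + 1 - 2 * (d : ℕ))) •
            (qZ n k d * qZ n k ((j : ℕ) + (l : ℕ) + 1 - (d : ℕ) : ℤ)))
        * (Pd n k (Sum.inr j) * Pd n k (Sum.inr l))
  + ∑ j : Fin k, ∑ l : Fin (n - k),
      (2 * (((j : ℕ) : ℂ) + (l : ℕ) + 1)) •
        (Mop n k (∑ d ∈ Finset.range ((j : ℕ) + 1),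
            pZ n k d * qZ n k ((j : ℕ) + (l : ℕ) + 1 - (d : ℕ) : ℤ))
          * (Pd n k (Sum.inl j) * Pd n k (Sum.inr l)))

/-- The operator `D_f` = multiplication by `-p_1`. -/
noncomputable def Df (n k : ℕ) : Module.End ℂ (PR n k) :=
  Mop n k (-(pZ n k 1))

/-!
The commutator of a second-order operator with multiplication by `p_1` contracts its coefficients
along `∂/∂p_1`, so the terms of `D_e` involving only `∂/∂q_j` drop out. The coefficients of
`∂²/∂p_j∂p_l` form a symmetric matrix, so their two contractions agree, and together they give
`2 ∑ j·p_j·∂/∂p_j`; those of `∂²/∂p_j∂q_l` give `2 ∑ j·q_j·∂/∂q_j`, and the coefficient of `∂/∂p_1`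
gives the constant `-k(n-k)`.
-/

section Operators

variable {R A ι κ : Type*} [CommRing R] [CommRing A] [Algebra R A] [Fintype ι] [Fintype κ]

variable (R) in
/-- The commutator `T ↦ T ∘ f - f ∘ T` with multiplication by `f`, as a linear map in `T`. -/
def commutatorMul (f : A) : Module.End R A →ₗ[R] Module.End R A :=
  LinearMap.mulRight R (LinearMap.mulLeft R f) - LinearMap.mulLeft R (LinearMap.mulLeft R f)

/-- The first-order differential operator `∑ i, g i · D i`, for derivations `D i` of `A`. -/
def firstOrderOp (g : ι → A) (D : ι → Derivation R A A) : Module.End R A :=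
  ∑ i, LinearMap.mulLeft R (g i) * (D i).toLinearMap

/-- The second-order differential operator `∑ i, ∑ j, g i j · D i ∘ E j`, for derivations `D i` and
`E j` of `A`. -/
def secondOrderOp (g : ι → κ → A) (D : ι → Derivation R A A) (E : κ → Derivation R A A) :
    Module.End R A :=
  ∑ i, ∑ j, LinearMap.mulLeft R (g i j) * ((D i).toLinearMap * (E j).toLinearMap)

lemma commutatorMul_mulLeft_mul_derivation (f g : A) (D : Derivation R A A) :
    commutatorMul R f (LinearMap.mulLeft R g * D.toLinearMap) = LinearMap.mulLeft R (g * D f) := by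
  ext a
  simp only [commutatorMul, LinearMap.sub_apply, LinearMap.mulRight_apply,
    LinearMap.mulLeft_apply, Module.End.mul_apply, Derivation.coeFn_coe, Derivation.leibniz,
    smul_eq_mul]
  ring

lemma commutatorMul_mulLeft_mul_derivation_mul_derivation (f g : A) (D E : Derivation R A A) :
    commutatorMul R f (LinearMap.mulLeft R g * (D.toLinearMap * E.toLinearMap)) =
      LinearMap.mulLeft R (g * D f) * E.toLinearMap +
        LinearMap.mulLeft R (g * E f) * D.toLinearMap + LinearMap.mulLeft R (g * D (E f)) := by
  ext a
  simp only [commutatorMul, LinearMap.sub_apply, LinearMap.add_apply, LinearMap.mulRight_apply,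
    LinearMap.mulLeft_apply, Module.End.mul_apply, Derivation.coeFn_coe, Derivation.leibniz,
    map_add, smul_eq_mul]
  ring

lemma commutatorMul_firstOrderOp (f : A) (g : ι → A) (D : ι → Derivation R A A) :
    commutatorMul R f (firstOrderOp g D) = LinearMap.mulLeft R (∑ i, g i * D i f) := by
  simp only [firstOrderOp, map_sum, commutatorMul_mulLeft_mul_derivation]
  ext a
  simp [Finset.sum_mul, mul_assoc]

lemma commutatorMul_firstOrderOp_eq_zero {f : A} (g : ι → A) {D : ι → Derivation R A A}
    (hD : ∀ i, D i f = 0) : commutatorMul R f (firstOrderOp g D) = 0 := by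
  simp [commutatorMul_firstOrderOp, hD]

lemma commutatorMul_secondOrderOp_eq_zero {f : A} (g : ι → κ → A) {D : ι → Derivation R A A}
    {E : κ → Derivation R A A} (hD : ∀ i, D i f = 0) (hE : ∀ j, E j f = 0) :
    commutatorMul R f (secondOrderOp g D E) = 0 := by
  simp [secondOrderOp, commutatorMul_mulLeft_mul_derivation_mul_derivation, hD, hE]

variable [DecidableEq ι] {f : A} {D : ι → Derivation R A A} {i₀ : ι}

lemma commutatorMul_firstOrderOp_of_dual (g : ι → A) (hD : ∀ i, D i f = if i = i₀ then 1 else 0) :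
    commutatorMul R f (firstOrderOp g D) = LinearMap.mulLeft R (g i₀) := by
  simp [commutatorMul_firstOrderOp, hD]

lemma sum_mulLeft_mul_apply_mul_of_dual (g : ι → A) (T : Module.End R A)
    (hD : ∀ i, D i f = if i = i₀ then 1 else 0) :
    ∑ i, LinearMap.mulLeft R (g i * D i f) * T = LinearMap.mulLeft R (g i₀) * T := by
  simp [hD, apply_ite (LinearMap.mulLeft R), ite_mul]

lemma commutatorMul_secondOrderOp_of_dual_left (g : ι → κ → A) {E : κ → Derivation R A A}
    (hD : ∀ i, D i f = if i = i₀ then 1 else 0) (hE : ∀ j, E j f = 0) :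
    commutatorMul R f (secondOrderOp g D E) = firstOrderOp (g i₀) E := by
  simp only [secondOrderOp, map_sum, commutatorMul_mulLeft_mul_derivation_mul_derivation, hE,
    map_zero, mul_zero, LinearMap.mulLeft_zero_eq_zero, zero_mul, add_zero]
  rw [Finset.sum_comm]
  exact Finset.sum_congr rfl fun j _ => sum_mulLeft_mul_apply_mul_of_dual (g · j) _ hD

lemma commutatorMul_secondOrderOp_of_symm {g : ι → ι → A} (hg : ∀ i j, g i j = g j i)
    (hD : ∀ i, D i f = if i = i₀ then 1 else 0) :
    commutatorMul R f (secondOrderOp g D D) = (2 : R) • firstOrderOp (g i₀) D := by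
  have D_D_f (i j : ι) : D i (D j f) = 0 := by rw [hD]; split_ifs <;> simp
  have contract_right : ∑ i, ∑ j, LinearMap.mulLeft R (g i j * D j f) * (D i).toLinearMap =
      firstOrderOp (g i₀) D := by
    simp only [sum_mulLeft_mul_apply_mul_of_dual _ _ hD, hg _ i₀, firstOrderOp]
  have contract_left : ∑ i, ∑ j, LinearMap.mulLeft R (g i j * D i f) * (D j).toLinearMap =
      firstOrderOp (g i₀) D := by
    rw [Finset.sum_comm, ← contract_right]
    simp only [hg]
  simp only [secondOrderOp, map_sum, commutatorMul_mulLeft_mul_derivation_mul_derivation, D_D_f,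
    mul_zero, LinearMap.mulLeft_zero_eq_zero, add_zero, Finset.sum_add_distrib, contract_left,
    contract_right, two_smul]

end Operators

section Coefficients

variable (R : Type*) {A : Type*} [CommRing R] [CommRing A] [Algebra R A]

/-- The coefficient `∑_{d ≤ i} (i+j+1-2d) a_d a_{i+j+1-d}` of `∂²/∂a_{i+1}∂a_{j+1}` in the
second-order operator attached to one family of generators `a_1, a_2, …`. -/
def quadCoeff (a : ℤ → A) (i j : ℕ) : A :=
  ∑ d ∈ range (i + 1), ((i : R) + j + 1 - 2 * d) • (a d * a ((i : ℤ) + j + 1 - d))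

/-- The coefficient `(i+j+1) ∑_{d ≤ i} a_d b_{i+j+1-d}` of `∂²/∂a_{i+1}∂b_{j+1}` in the
second-order operator coupling two families of generators `a_1, a_2, …` and `b_1, b_2, …`. -/
def mixedCoeff (a b : ℤ → A) (i j : ℕ) : A :=
  ((i : R) + j + 1) • ∑ d ∈ range (i + 1), a d * b ((i : ℤ) + j + 1 - d)

lemma quadCoeff_zero_left {a : ℤ → A} (ha : a 0 = 1) (j : ℕ) :
    quadCoeff R a 0 j = ((j : R) + 1) • a (j + 1) := by
  simp [quadCoeff, ha]

lemma mixedCoeff_zero_left {a : ℤ → A} (ha : a 0 = 1) (b : ℤ → A) (j : ℕ) :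
    mixedCoeff R a b 0 j = ((j : R) + 1) • b (j + 1) := by
  simp [mixedCoeff, ha]

lemma quadCoeff_comm (a : ℤ → A) (i j : ℕ) : quadCoeff R a i j = quadCoeff R a j i := by
  wlog hij : i ≤ j generalizing i j
  · exact (this j i (Nat.le_of_not_le hij)).symm
  set F : ℕ → A := fun d => ((i : R) + j + 1 - 2 * d) • (a d * a ((i : ℤ) + j + 1 - d)) with hF
  -- The terms with `i < d ≤ j` cancel in pairs under `d ↦ i + j + 1 - d`.
  have reflect {d e : ℕ} (hde : i + j + 1 = d + e) : F d + F e = 0 := by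
    have hR : (i : R) + j + 1 = d + e := by simpa using congrArg (Nat.cast : ℕ → R) hde
    have hZ : (i : ℤ) + j + 1 = d + e := by exact_mod_cast hde
    simp only [hF, hR, hZ, add_sub_cancel_left, add_sub_cancel_right, mul_comm (a e)]
    module
  have fixed {d : ℕ} (hd : i + j + 1 = d + d) : F d = 0 := by
    have hR : (i : R) + j + 1 = d + d := by simpa using congrArg (Nat.cast : ℕ → R) hd
    simp [hF, hR, two_mul]
  have middle : ∑ d ∈ Ico (i + 1) (j + 1), F d = 0 :=
    Finset.sum_involution (fun d _ => i + j + 1 - d)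
      (fun d hd => reflect (by grind))
      (fun d hd hFd hfix => hFd (fixed (by grind)))
      (fun d hd => by grind)
      (fun d hd => by grind)
  calc quadCoeff R a i j = ∑ d ∈ range (i + 1), F d + ∑ d ∈ Ico (i + 1) (j + 1), F d := by
        rw [middle, add_zero, quadCoeff]
    _ = ∑ d ∈ range (j + 1), F d := Finset.sum_range_add_sum_Ico F (by omega)
    _ = quadCoeff R a j i := by simp only [quadCoeff, hF, add_comm (i : R), add_comm (i : ℤ)]

end Coefficients

section Generators

variable (n k : ℕ)

lemma pZ_zero : pZ n k 0 = 1 := if_pos rfl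

lemma pZ_succ (j : Fin k) : pZ n k ((j : ℕ) + 1) = X (Sum.inl j) := by
  rw [pZ, if_neg (by omega), dif_pos (by omega)]
  simp

lemma qZ_succ (l : Fin (n - k)) : qZ n k ((l : ℕ) + 1) = X (Sum.inr l) := by
  rw [qZ, if_neg (by omega), dif_pos (by omega)]
  simp

/-- The derivation `∂/∂p_{j+1}` of `P`. -/
noncomputable def pDeriv (j : Fin k) : Derivation ℂ (PR n k) (PR n k) := pderiv (Sum.inl j)

/-- The derivation `∂/∂q_{l+1}` of `P`. -/
noncomputable def qDeriv (l : Fin (n - k)) : Derivation ℂ (PR n k) (PR n k) := pderiv (Sum.inr l)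

variable {k}

lemma pZ_one (hk : 1 ≤ k) : pZ n k 1 = X (Sum.inl ⟨0, hk⟩) := by
  simpa using pZ_succ n k ⟨0, hk⟩

lemma pDeriv_pZ_one (hk : 1 ≤ k) (j : Fin k) :
    pDeriv n k j (pZ n k 1) = if j = ⟨0, hk⟩ then 1 else 0 := by
  simp [pDeriv, pZ_one n hk, pderiv_X, Pi.single_apply, eq_comm]

lemma qDeriv_pZ_one (hk : 1 ≤ k) (l : Fin (n - k)) : qDeriv n k l (pZ n k 1) = 0 := by
  simp [qDeriv, pZ_one n hk, pderiv_X]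

variable (k)

lemma De_eq_firstOrderOp_add_secondOrderOp : De n k =
    firstOrderOp (fun j : Fin k =>
        (-(((k : ℂ) - (j : ℕ)) * ((n : ℂ) - k + (j : ℕ)))) • pZ n k (j : ℕ)) (pDeriv n k)
    + firstOrderOp (fun l : Fin (n - k) =>
        (((k : ℂ) + (l : ℕ)) * ((n : ℂ) - k - (l : ℕ))) • qZ n k (l : ℕ)) (qDeriv n k)
    + secondOrderOp (fun j l : Fin k => quadCoeff ℂ (pZ n k) j l) (pDeriv n k) (pDeriv n k)
    - secondOrderOp (fun j l : Fin (n - k) => quadCoeff ℂ (qZ n k) j l) (qDeriv n k) (qDeriv n k)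
    + (2 : ℂ) • secondOrderOp (fun (j : Fin k) (l : Fin (n - k)) =>
        mixedCoeff ℂ (pZ n k) (qZ n k) j l) (pDeriv n k) (qDeriv n k) := by
  refine LinearMap.ext fun a => ?_
  simp [De, firstOrderOp, secondOrderOp, Mop, Pd, pDeriv, qDeriv, quadCoeff, mixedCoeff,
    mul_smul, Finset.smul_sum, Finset.sum_mul]

lemma Dh_eq_firstOrderOp_add_smul_one : Dh n k =
    (-2 : ℂ) • firstOrderOp (fun j : Fin k => ((j : ℕ) + 1 : ℂ) • pZ n k ((j : ℕ) + 1)) (pDeriv n k)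
    + (-2 : ℂ) • firstOrderOp (fun l : Fin (n - k) => ((l : ℕ) + 1 : ℂ) • qZ n k ((l : ℕ) + 1))
        (qDeriv n k)
    + ((k * (n - k) : ℕ) : ℂ) • 1 := by
  refine LinearMap.ext fun a => ?_
  simp [Dh, firstOrderOp, Mop, Pd, pDeriv, qDeriv, pZ_succ, qZ_succ, Finset.smul_sum, smul_smul]

lemma commutator_Df (T : Module.End ℂ (PR n k)) :
    T * Df n k - Df n k * T = -commutatorMul ℂ (pZ n k 1) T := by
  refine LinearMap.ext fun a => ?_
  simp [Df, Mop, commutatorMul, neg_add_eq_sub]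

end Generators

/-- As operators on `P`, `[D_e, D_f] = D_h`. -/
theorem commutator_De_Df (n k : ℕ) (hk1 : 1 ≤ k) (hk2 : k ≤ n - 1) :
    De n k * Df n k - Df n k * De n k = Dh n k := by
  have hp := pDeriv_pZ_one n hk1
  have hq := qDeriv_pZ_one n hk1
  have order_zero : LinearMap.mulLeft ℂ ((-(((k : ℂ) - (0 : ℕ)) * ((n : ℂ) - k + (0 : ℕ)))) •
      pZ n k (0 : ℕ)) = -((k * (n - k) : ℕ) : ℂ) • 1 := by
    refine LinearMap.ext fun a => ?_
    simp [pZ_zero, Nat.cast_sub (show k ≤ n by omega)]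
  rw [commutator_Df, De_eq_firstOrderOp_add_secondOrderOp, Dh_eq_firstOrderOp_add_smul_one,
    map_add, map_sub, map_add, map_add, map_smul,
    commutatorMul_firstOrderOp_of_dual _ hp, commutatorMul_firstOrderOp_eq_zero _ hq,
    commutatorMul_secondOrderOp_of_symm (fun _ _ => quadCoeff_comm ..) hp,
    commutatorMul_secondOrderOp_eq_zero _ hq hq,
    commutatorMul_secondOrderOp_of_dual_left _ hp hq, order_zero]
  simp only [quadCoeff_zero_left ℂ (pZ_zero n k), mixedCoeff_zero_left ℂ (pZ_zero n k)]
  module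
end
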